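/- Let I be a nonempty finite set of voters and X a set of alternatives with at least 3 elements. Let F be a social welfare function assigning to every profile of individual preferences (a function from I to linear orders on X) a linear order on X. Suppose F satisfies: (A1, sovereignty of electors) F is surjective onto the linear orders on X; (A2, positive correlation) if for some profile P the order F(P) ranks x strictly above y, and P' is a profile obtained from P where the only change is that some electors raise the position of x in their rankings (the relative order of all pairs of alternatives other than those involving x is unchanged, and x never drops below any alternative it was above), then F(P') still ranks x strictly above y; (A3, independence of irrelevant alternatives) for any two alternatives x, y and any two profiles P, P' such that every voter ranks x versus y the same way in P as in P', F(P) ranks x above y if and only if F(P') does. Then F is a dictatorship: there exists a voter i ∈ I such that for every profile P, F(P) equals the preference order of voter i in P. -/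

import Mathlib

theorem aux_trans {X : Type} (L : LinearOrder X) {u v w : X} (h : L.lt u v) (h' : L.lt v w) :
    L.lt u w := @lt_trans X L.toPreorder u v w h h'

theorem aux_asymm {X : Type} (L : LinearOrder X) {u v : X} (h : L.lt u v) (h' : L.lt v u) :
    False := @lt_asymm X L.toPreorder u v h h'

theorem aux_not {X : Type} (L : LinearOrder X) {u v : X} (n : u ≠ v) (h : ¬ L.lt u v) :
    L.lt v u := by
  rcases @lt_trichotomy X L u v with h1 | h1 | h1
  · exact absurd h1 h
  · exact absurd h1 n
  · exact h1

theorem aux_order {X : Type} (L0 : LinearOrder X) (r : X → ℕ) :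
    ∃ L : LinearOrder X, ∀ u v, L.lt u v ↔ (r u < r v ∨ (r u = r v ∧ L0.lt u v)) := by
  let _ := L0
  let f : X → ℕ ×ₗ X := fun u => toLex (r u, u)
  have hf : Function.Injective f := by
    intro u v h
    have := congrArg (fun p => (ofLex p).2) h
    exact this
  refine ⟨LinearOrder.lift' f hf, fun u v => ?_⟩
  change f u < f v ↔ _
  exact Prod.Lex.toLex_lt_toLex

theorem aux_three {I X : Type} (x y z : X) (hxy : x ≠ y) (hyz : y ≠ z) (hxz : x ≠ z)
    (r : I → ℕ × ℕ × ℕ)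
    (hr : ∀ i, (r i).1 ≠ (r i).2.1 ∧ (r i).2.1 ≠ (r i).2.2 ∧ (r i).1 ≠ (r i).2.2) :
    ∃ P : I → LinearOrder X, ∀ i, ((P i).lt x y ↔ (r i).1 < (r i).2.1) ∧
      ((P i).lt y z ↔ (r i).2.1 < (r i).2.2) ∧ ((P i).lt x z ↔ (r i).1 < (r i).2.2) ∧
      ((P i).lt z x ↔ (r i).2.2 < (r i).1) := by
  classical
  obtain ⟨L0⟩ : Nonempty (LinearOrder X) := ⟨linearOrderOfSTO (WellOrderingRel)⟩
  choose L hL using aux_order L0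
  refine ⟨fun i => L (fun u => if u = x then (r i).1 else if u = y then (r i).2.1 else (r i).2.2),
    fun i => ?_⟩
  obtain ⟨h1, h2, h3⟩ := hr i
  simp [hL, hxy.symm, hyz.symm, hxz.symm, h1, h2, h3, h3.symm]


/-- Arrow's impossibility theorem. `I` is a nonempty finite set of voters, `X` a set of
alternatives with at least three elements. A profile is a function `I → LinearOrder X`
assigning a linear preference order to each voter, and the social welfare function `F`
assigns a collective linear order to each profile. If `F` is surjective (sovereignty of
electors), positively correlated (raising the position of an alternative `x` in some
voters' rankings, while leaving all comparisons not involving `x` unchanged and never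
dropping `x` below an alternative it was above, cannot make `x` lose a strict collective
win over some `y`), and independent of irrelevant alternatives (the collective ranking
of `x` versus `y` only depends on the individual rankings of `x` versus `y`), then `F`
is a dictatorship: some voter `i` is such that `F P` is always voter `i`'s order. -/
theorem arrow_impossibility {I X : Type} [Fintype I] [Nonempty I]
    (hX : ∃ a b c : X, a ≠ b ∧ b ≠ c ∧ a ≠ c)
    (F : (I → LinearOrder X) → LinearOrder X)
    -- A1: sovereignty of electors
    (A1 : Function.Surjective F)
    -- A2: positive correlation
    (A2 : ∀ (P P' : I → LinearOrder X) (x y : X),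
      (∀ i : I, ∀ u v : X, u ≠ x → v ≠ x → ((P i).lt u v ↔ (P' i).lt u v)) →
      (∀ i : I, ∀ u : X, (P i).lt u x → (P' i).lt u x) →
      (F P).lt y x → (F P').lt y x)
    -- A3: independence of irrelevant alternatives
    (A3 : ∀ (P P' : I → LinearOrder X) (x y : X),
      (∀ i : I, ((P i).lt x y ↔ (P' i).lt x y)) →
      ((F P).lt x y ↔ (F P').lt x y)) :
    ∃ i : I, ∀ P : I → LinearOrder X, F P = P i := by

  classical
  obtain ⟨a0, b0, c0, hab, hbc, hac⟩ := hX
  have third : ∀ x y : X, ∃ z, z ≠ x ∧ z ≠ y := by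
    intro x y
    by_contra! h
    have h1 := h a0
    have h2 := h b0
    have h3 := h c0
    by_cases e1 : a0 = x
    · have e2 := h2 (fun e => hab (e1.trans e.symm))
      have e3 := h3 (fun e => hac (e1.trans e.symm))
      exact hbc (e2.trans e3.symm)
    · have e1' := h1 e1
      by_cases e2 : b0 = x
      · exact hac (e1'.trans (h3 (fun e => hbc (e2.trans e.symm))).symm)
      · exact hab (e1'.trans (h2 e2).symm)
  -- unanimity
  have una : ∀ (P : I → LinearOrder X) (x y : X), (∀ i, (P i).lt x y) → (F P).lt x y := by
    intro P x y h
    have hne : x ≠ y := by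
      rintro rfl
      obtain ⟨i⟩ := ‹Nonempty I›
      exact aux_asymm _ (h i) (h i)
    obtain ⟨z, hzx, hzy⟩ := third x y
    obtain ⟨L1, hL1⟩ := aux_three (I := Unit) x y z hne hzy.symm hzx.symm (fun _ => (0, 1, 2))
      (by simp)
    obtain ⟨Q, hQ⟩ := A1 (L1 ())
    have hQxy : (F Q).lt x y := by
      rw [hQ]; exact (hL1 ()).1.2 (by simp)
    choose P' hP' using fun i => aux_order (Q i) (fun u => if u = y then 1 else 0)
    have h1 : (F P').lt x y := by
      refine A2 Q P' y x ?_ ?_ hQxy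
      · intro i u v hu hv
        simp [hP', hu, hv]
      · intro i u hu
        have : u ≠ y := by
          rintro rfl
          exact aux_asymm _ hu hu
        simp [hP', this]
    refine (A3 P' P x y fun i => ?_).1 h1
    simp [hP', hne, h i]
  let W : X → X → Set I → Prop := fun x y S =>
    ∀ P : I → LinearOrder X, (∀ i, (P i).lt x y ↔ i ∈ S) → (F P).lt x y
  have mkW : ∀ (x y : X) (S : Set I) (P : I → LinearOrder X), (∀ i, (P i).lt x y ↔ i ∈ S) →
      (F P).lt x y → W x y S := by
    intro x y S P h hF Q hQ
    exact (A3 P Q x y fun i => (h i).trans (hQ i).symm).1 hF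
  have right : ∀ x y z S, x ≠ y → x ≠ z → W x y S → W x z S := by
    intro x y z S hxy hxz h
    by_cases hyz : y = z
    · exact hyz ▸ h
    obtain ⟨P, hP⟩ := aux_three (I := I) x y z hxy hyz hxz
      (fun i => if i ∈ S then (0, 1, 2) else (2, 0, 1)) (by intro i; split_ifs <;> simp)
    refine mkW x z S P (fun i => ?_) (aux_trans _ (h P fun i => ?_) (una P y z fun i => ?_))
    · rw [(hP i).2.2.1]; split_ifs with hi <;> simp [hi]
    · rw [(hP i).1]; split_ifs with hi <;> simp [hi]
    · rw [(hP i).2.1]; split_ifs with hi <;> simp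
  have left : ∀ x y z S, x ≠ y → z ≠ y → W x y S → W z y S := by
    intro x y z S hxy hzy h
    by_cases hxz : x = z
    · exact hxz ▸ h
    obtain ⟨P, hP⟩ := aux_three (I := I) z x y (Ne.symm hxz) hxy hzy
      (fun i => if i ∈ S then (0, 1, 2) else (1, 2, 0)) (by intro i; split_ifs <;> simp)
    refine mkW z y S P (fun i => ?_) (aux_trans _ (una P z x fun i => ?_) (h P fun i => ?_))
    · rw [(hP i).2.2.1]; split_ifs with hi <;> simp [hi]
    · rw [(hP i).1]; split_ifs with hi <;> simp
    · rw [(hP i).2.1]; split_ifs with hi <;> simp [hi]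
  have neutral : ∀ a b c d S, a ≠ b → c ≠ d → W a b S → W c d S := by
    intro a b c d S hab hcd h
    by_cases hd : a = d
    · subst hd
      obtain ⟨z, hza, hzc⟩ := third a c
      exact right c z a S hzc.symm hcd
        (left a z c S hza.symm hzc.symm (right a b z S hab hza.symm h))
    · exact left a d c S hd hcd (right a b d S hab hd h)
  let D : Set I → Prop := fun S => W a0 b0 S
  have Dget : ∀ S, D S → ∀ x y, x ≠ y → W x y S := fun S h x y hxy =>
    neutral a0 b0 x y S hab hxy h
  have Dempty : ¬ D ∅ := by
    intro h
    obtain ⟨P, hP⟩ := aux_three (I := I) a0 b0 c0 hab hbc hac (fun _ => (2, 1, 0)) (by simp)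
    have h0 : ∀ i, ¬ (P i).lt a0 b0 := fun i => by rw [(hP i).1]; simp
    exact aux_asymm _ (h P fun i => by simp [h0 i]) (una P b0 a0 fun i => aux_not _ hab (h0 i))
  have Dcompl : ∀ S, ¬ D S → D Sᶜ := by
    intro S h
    have h' : ¬ ∀ P : I → LinearOrder X, (∀ i, (P i).lt a0 b0 ↔ i ∈ S) → (F P).lt a0 b0 := h
    obtain ⟨P, h'⟩ := not_forall.1 h'
    obtain ⟨hP, hF⟩ := Classical.not_imp.1 h'
    refine neutral b0 a0 a0 b0 _ hab.symm hab (mkW b0 a0 _ P (fun i => ?_) (aux_not _ hab hF))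
    rw [Set.mem_compl_iff, ← hP i]
    exact ⟨fun h1 h2 => aux_asymm _ h1 h2, fun h1 => aux_not _ hab h1⟩
  have Dinter : ∀ S T, D S → D T → D (S ∩ T) := by
    intro S T hS hT
    obtain ⟨P, hP⟩ := aux_three (I := I) a0 b0 c0 hab hbc hac
      (fun i => if i ∈ S then (if i ∈ T then (0, 1, 2) else (1, 2, 0)) else
        (if i ∈ T then (2, 0, 1) else (2, 1, 0)))
      (by intro i; split_ifs <;> simp)
    refine neutral a0 c0 a0 b0 _ hac hab (mkW a0 c0 _ P (fun i => ?_)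
      (aux_trans _ (Dget S hS a0 b0 hab P fun i => ?_) (Dget T hT b0 c0 hbc P fun i => ?_)))
    · rw [(hP i).2.2.1]; split_ifs with h1 h2 h2 <;> simp [h1, h2]
    · rw [(hP i).1]; split_ifs with h1 h2 h2 <;> simp [h1]
    · rw [(hP i).2.1]; split_ifs with h1 h2 h2 <;> simp [h2]
  have ex : ∃ i, D {i} := by
    by_contra! hno
    have key : ∀ s : Finset I, D ((s : Set I)ᶜ) := by
      intro s
      induction s using Finset.induction_on with
      | empty => exact Dcompl _ (by simpa using Dempty)
      | insert a s _ ih =>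
        have := Dinter _ _ (Dcompl _ (hno a)) ih
        rwa [← Set.compl_union, ← Set.insert_eq, ← Finset.coe_insert] at this
    exact Dempty (by simpa using key Finset.univ)
  obtain ⟨i, hi⟩ := ex
  have dict : ∀ P x y, (P i).lt x y → (F P).lt x y := by
    intro P x y h
    have hne : x ≠ y := by
      rintro rfl
      exact aux_asymm _ h h
    have hD : D {j | (P j).lt x y} := by
      by_contra hn
      have h1 := Dinter _ _ hi (Dcompl _ hn)
      have h2 : ({i} : Set I) ∩ {j | (P j).lt x y}ᶜ = ∅ := by
        ext j
        simp only [Set.mem_inter_iff, Set.mem_singleton_iff, Set.mem_compl_iff, Set.mem_ofPred_eq,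
          Set.mem_empty_iff_false, iff_false, not_and, not_not]
        rintro rfl
        exact h
      exact Dempty (h2 ▸ h1)
    exact Dget _ hD x y hne P fun j => Iff.rfl
  refine ⟨i, fun P => LinearOrder.ext_lt fun x y => ⟨fun h => ?_, dict P x y⟩⟩
  by_contra hn
  have hne : x ≠ y := by
    rintro rfl
    exact aux_asymm _ h h
  exact aux_asymm _ h (dict P y x (aux_not _ hne hn))
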